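/- Assume Condition (★)(i)–(ii). Then for every i ∈ {2,…,n}, every initial condition (x_1,…,x_n), and every t ≥ 0, ‖Π_i ∘ Lin^{∘t}(x_1,…,x_n) − L_i^{t} pert_i(x_1,…,x_i)‖_{ℂ^{d_i}} ≤ Σ_{j=1}^{i−1} ‖D_{i,j}‖ · ‖L_j^{t} pert_j(x_1,…,x_j)‖_{ℂ^{d_j}}. -/

import Mathlib

/-!
Each off-diagonal `D_{k+1,j}` (with `j ≤ k`) is the solution of the Sylvester equation
`L_{k+1} D_{k+1,j} - D_{k+1,j} L_j = C_k D_{k,j}` (`Dmat_sylvester`): in the eigenbases of `L_{k+1}`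
and `L_j` it is solved entrywise, the factor `1 - λ_j / λ_{k+1}` being nonzero because the spectra
are disjoint. The signs `(-1)^{k-j}` turn these equations into the statement that
`(∑_{j ≤ k} (-1)^{k-j} D_{k,j} L_j^t pert_j)_k` is a trajectory of the cascade, and the
recursion defining `pert` says exactly that it starts at `x`. Hence it is the trajectory of `x`
(`iterate_LinStep_eq`). The summand `j = k` is `L_k^t pert_k`; the triangle inequality and the
operator norm bound the others.
-/

open Matrix Finset Filter Topology

noncomputable section

/-- A matrix acting as a continuous linear map between Euclidean spaces. -/
def matCLM {p q : ℕ} (M : Matrix (Fin p) (Fin q) ℂ) :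
    EuclideanSpace ℂ (Fin q) →L[ℂ] EuclideanSpace ℂ (Fin p) :=
  LinearMap.toContinuousLinearMap (Matrix.toEuclideanLin M)

/-- Operator norm of a matrix induced by the Euclidean norms. -/
def opN {p q : ℕ} (M : Matrix (Fin p) (Fin q) ℂ) : ℝ := ‖matCLM M‖

/-- One step of the chained linear cascade (levels indexed from `0`). -/
def LinStep {d : ℕ → ℕ} (L : ∀ i, Matrix (Fin (d i)) (Fin (d i)) ℂ)
    (C : ∀ i, Matrix (Fin (d (i+1))) (Fin (d i)) ℂ)
    (x : ∀ i, EuclideanSpace ℂ (Fin (d i))) (i : ℕ) :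
    EuclideanSpace ℂ (Fin (d i)) :=
  match i with
  | 0 => matCLM (L 0) (x 0)
  | (i+1) => matCLM (L (i+1)) (x (i+1)) + matCLM (C i) (x i)

/-- The matrices `D_{i,j}` of the paper (levels indexed from `0`). -/
def Dmat {d : ℕ → ℕ} (L : ∀ i, Matrix (Fin (d i)) (Fin (d i)) ℂ)
    (C : ∀ i, Matrix (Fin (d (i+1))) (Fin (d i)) ℂ)
    (V : ∀ i, Matrix (Fin (d i)) (Fin (d i)) ℂ)
    (ev : ∀ i, Fin (d i) → ℂ) : ∀ i j : ℕ, Matrix (Fin (d i)) (Fin (d j)) ℂ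
  | 0, 0 => 1
  | 0, _ + 1 => 0
  | i + 1, j =>
    if h : j = i + 1 then by subst h; exact 1
    else
      (L (i+1))⁻¹ * V (i+1) *
        Matrix.of (fun ℓ m =>
          ((V (i+1))⁻¹ * C i * Dmat L C V ev i j * V j) ℓ m
            * (1 - ev j m / ev (i+1) ℓ)⁻¹) * (V j)⁻¹

/-- The perturbation maps `pert_i` of the paper (levels indexed from `0`). -/
def pert {d : ℕ → ℕ} (L : ∀ i, Matrix (Fin (d i)) (Fin (d i)) ℂ)
    (C : ∀ i, Matrix (Fin (d (i+1))) (Fin (d i)) ℂ)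
    (V : ∀ i, Matrix (Fin (d i)) (Fin (d i)) ℂ)
    (ev : ∀ i, Fin (d i) → ℂ)
    (x : ∀ k, EuclideanSpace ℂ (Fin (d k))) : ∀ i : ℕ, EuclideanSpace ℂ (Fin (d i))
  | 0 => x 0
  | i + 1 => x (i+1) + ∑ j ∈ (Finset.range (i+1)).attach,
      ((-1 : ℂ) ^ (i - j.1)) • matCLM (Dmat L C V ev (i+1) j.1) (pert L C V ev x j.1)
  termination_by i => i
  decreasing_by exact Finset.mem_range.mp j.2

/-- The `s`-th principal eigenfunction of component system `i`. -/
def psi {d : ℕ → ℕ} (V : ∀ i, Matrix (Fin (d i)) (Fin (d i)) ℂ) (i : ℕ) (s : Fin (d i)) :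
    EuclideanSpace ℂ (Fin (d i)) →L[ℂ] ℂ :=
  (EuclideanSpace.proj s).comp (matCLM (V i)⁻¹)

theorem matCLM_mul {p q r : ℕ} (A : Matrix (Fin p) (Fin q) ℂ) (B : Matrix (Fin q) (Fin r) ℂ)
    (v : EuclideanSpace ℂ (Fin r)) : matCLM (A * B) v = matCLM A (matCLM B v) := by
  simp [matCLM, Matrix.toLpLin_apply, Matrix.mulVec_mulVec]

theorem matCLM_one {p : ℕ} (v : EuclideanSpace ℂ (Fin p)) :
    matCLM (1 : Matrix (Fin p) (Fin p) ℂ) v = v := by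
  simp [matCLM]

theorem matCLM_add {p q : ℕ} (A B : Matrix (Fin p) (Fin q) ℂ)
    (v : EuclideanSpace ℂ (Fin q)) : matCLM (A + B) v = matCLM A v + matCLM B v := by
  simp [matCLM]

section Cascade

variable {d : ℕ → ℕ} (L : ∀ i, Matrix (Fin (d i)) (Fin (d i)) ℂ)
    (C : ∀ i, Matrix (Fin (d (i+1))) (Fin (d i)) ℂ)
    (V : ∀ i, Matrix (Fin (d i)) (Fin (d i)) ℂ)
    (ev : ∀ i, Fin (d i) → ℂ)

theorem Dmat_self (i : ℕ) : Dmat L C V ev i i = 1 := by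
  cases i with
  | zero => rw [Dmat]
  | succ i => rw [Dmat]; exact dif_pos rfl

theorem Dmat_succ (i j : ℕ) (h : j ≠ i + 1) : Dmat L C V ev (i+1) j =
      (L (i+1))⁻¹ * V (i+1) *
        Matrix.of (fun ℓ m =>
          ((V (i+1))⁻¹ * C i * Dmat L C V ev i j * V j) ℓ m
            * (1 - ev j m / ev (i+1) ℓ)⁻¹) * (V j)⁻¹ := by
  rw [Dmat]; exact dif_neg h

theorem ev_ne_zero
    (hdiag : ∀ i, L i = V i * Matrix.diagonal (ev i) * (V i)⁻¹)
    (hLu : ∀ i, IsUnit (L i)) (i : ℕ) (ℓ : Fin (d i)) : ev i ℓ ≠ 0 := by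
  intro h0
  have h := (Matrix.isUnit_iff_isUnit_det _).mp (hLu i)
  apply h.ne_zero
  rw [hdiag i, Matrix.det_mul, Matrix.det_mul, Matrix.det_diagonal,
    Finset.prod_eq_zero (Finset.mem_univ ℓ) h0]
  simp

/-- `D_{k+1,j}` solves the Sylvester equation with right-hand side `C_k D_{k,j}`. -/
theorem Dmat_sylvester
    (hdiag : ∀ i, L i = V i * Matrix.diagonal (ev i) * (V i)⁻¹)
    (hV : ∀ i, IsUnit (V i))
    (hLu : ∀ i, IsUnit (L i))
    (hsp : ∀ i j : ℕ, i ≠ j → ∀ ℓ m, ev i ℓ ≠ ev j m) (k j : ℕ) (h : j ≠ k + 1) :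
    L (k+1) * Dmat L C V ev (k+1) j = Dmat L C V ev (k+1) j * L j + C k * Dmat L C V ev k j := by
  have hev := ev_ne_zero L V ev hdiag hLu (k+1)
  have hVd : ∀ i, IsUnit (V i).det := fun i => (Matrix.isUnit_iff_isUnit_det _).mp (hV i)
  have hLd : IsUnit (L (k+1)).det := (Matrix.isUnit_iff_isUnit_det _).mp (hLu _)
  rw [Dmat_succ L C V ev k j h]
  set M := (V (k+1))⁻¹ * C k * Dmat L C V ev k j * V j with hM
  set E : Matrix (Fin (d (k+1))) (Fin (d j)) ℂ :=
    Matrix.of (fun ℓ m => M ℓ m * (1 - ev j m / ev (k+1) ℓ)⁻¹) with hE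
  -- `L⁻¹ V = V Λ⁻¹`
  have h1 : (L (k+1))⁻¹ * V (k+1) = V (k+1) * Matrix.diagonal (fun ℓ => (ev (k+1) ℓ)⁻¹) := by
    have h2 : L (k+1) * (V (k+1) * Matrix.diagonal (fun ℓ => (ev (k+1) ℓ)⁻¹)) = V (k+1) := by
      rw [hdiag (k+1), Matrix.mul_assoc, Matrix.nonsing_inv_mul_cancel_left _ _ (hVd _),
        Matrix.mul_assoc, Matrix.diagonal_mul_diagonal]
      simp [hev]
    rw [← Matrix.nonsing_inv_mul_cancel_left _ (V (k+1) * _) hLd, h2]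
  -- the Sylvester equation in eigencoordinates, where it is entrywise
  have h3 : E = Matrix.diagonal (fun ℓ => (ev (k+1) ℓ)⁻¹) * E * Matrix.diagonal (ev j) + M := by
    ext ℓ m
    have hne : ev (k+1) ℓ - ev j m ≠ 0 := sub_ne_zero.mpr (hsp _ _ (Ne.symm h) ℓ m)
    have hne' := hev ℓ
    have hne2 : 1 - ev j m / ev (k+1) ℓ ≠ 0 := by
      rw [one_sub_div hne']; exact div_ne_zero hne hne'
    rw [Matrix.add_apply, Matrix.mul_diagonal, Matrix.diagonal_mul]
    simp only [hE, Matrix.of_apply]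
    field_simp
    ring
  have h4 : C k * Dmat L C V ev k j = V (k+1) * M * (V j)⁻¹ := by
    rw [hM]
    simp only [Matrix.mul_assoc]
    rw [Matrix.mul_nonsing_inv _ (hVd j), Matrix.mul_one,
      Matrix.mul_nonsing_inv_cancel_left _ _ (hVd (k+1))]
  have h5 : L (k+1) * ((L (k+1))⁻¹ * V (k+1) * E * (V j)⁻¹) = V (k+1) * E * (V j)⁻¹ := by
    simp only [Matrix.mul_assoc]
    rw [Matrix.mul_nonsing_inv_cancel_left _ _ hLd]
  have h6 : V (k+1) * Matrix.diagonal (fun ℓ => (ev (k+1) ℓ)⁻¹) * E * (V j)⁻¹ * L j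
      = V (k+1) * (Matrix.diagonal (fun ℓ => (ev (k+1) ℓ)⁻¹) * E * Matrix.diagonal (ev j))
        * (V j)⁻¹ := by
    rw [hdiag j]
    simp only [Matrix.mul_assoc]
    rw [Matrix.nonsing_inv_mul_cancel_left _ _ (hVd j)]
  rw [h5, h1, h6, h4, ← Matrix.add_mul, ← Matrix.mul_add, ← h3]

theorem pert_succ (x : ∀ k, EuclideanSpace ℂ (Fin (d k))) (i : ℕ) :
    pert L C V ev x (i+1) = x (i+1) + ∑ j ∈ Finset.range (i+1),
      ((-1 : ℂ) ^ (i - j)) • matCLM (Dmat L C V ev (i+1) j) (pert L C V ev x j) := by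
  rw [pert]
  congr 1
  exact Finset.sum_attach (Finset.range (i+1)) (fun j =>
    ((-1 : ℂ) ^ (i - j)) • matCLM (Dmat L C V ev (i+1) j) (pert L C V ev x j))

theorem neg_one_pow_succ_sub {k j : ℕ} (h : j ∈ Finset.range (k+1)) :
    ((-1 : ℂ) ^ (k + 1 - j)) = -(-1) ^ (k - j) := by
  rw [Nat.succ_sub (Nat.lt_succ_iff.mp (Finset.mem_range.mp h)), pow_succ]
  ring

/-- Closed form of the trajectory: at each level it is a signed combination of the decoupled
evolutions `L_j^t pert_j`. -/
theorem iterate_LinStep_eq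
    (hdiag : ∀ i, L i = V i * Matrix.diagonal (ev i) * (V i)⁻¹)
    (hV : ∀ i, IsUnit (V i))
    (hLu : ∀ i, IsUnit (L i))
    (hsp : ∀ i j : ℕ, i ≠ j → ∀ ℓ m, ev i ℓ ≠ ev j m)
    (x : ∀ i, EuclideanSpace ℂ (Fin (d i))) (t : ℕ) : ∀ k : ℕ,
    (LinStep L C)^[t] x k = ∑ j ∈ Finset.range (k+1), ((-1 : ℂ) ^ (k - j)) •
      matCLM (Dmat L C V ev k j) (matCLM ((L j) ^ t) (pert L C V ev x j)) := by
  induction t with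
  | zero =>
    intro k
    simp only [Function.iterate_zero, id, pow_zero, matCLM_one]
    cases k with
    | zero => simp [Dmat_self, matCLM_one, pert]
    | succ k =>
      rw [Finset.sum_range_succ, Dmat_self, matCLM_one, pert_succ, Nat.sub_self, pow_zero,
        one_smul, Finset.sum_congr rfl (fun j hj => by rw [neg_one_pow_succ_sub hj, neg_smul]),
        Finset.sum_neg_distrib]
      abel
  | succ t ih =>
    intro k
    rw [Function.iterate_succ_apply']
    simp only [pow_succ', matCLM_mul]
    cases k with
    | zero => simp [LinStep, ih, Dmat_self, matCLM_one]
    | succ k =>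
      rw [LinStep, ih, ih, Finset.sum_range_succ, Finset.sum_range_succ _ (k+1)]
      simp only [map_add, map_sum, map_smul, Dmat_self, matCLM_one, Nat.sub_self, pow_zero,
        one_smul]
      rw [add_right_comm, ← Finset.sum_add_distrib]
      congr 1
      refine Finset.sum_congr rfl fun j hj => ?_
      have hne : j ≠ k + 1 := (Finset.mem_range.mp hj).ne
      rw [neg_one_pow_succ_sub hj, ← matCLM_mul (L (k+1)),
        Dmat_sylvester L C V ev hdiag hV hLu hsp k j hne, matCLM_add, matCLM_mul, matCLM_mul]
      module

end Cascade

/-- bound on the deviation from the nominal evolution, Condition (★)(i)–(ii).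
Levels are indexed from `0`: the paper's level `i ∈ {2,…,n}` is `i+1` here and the paper's sum
`∑_{j=1}^{i−1}` becomes `∑_{j=0}^{i}`, i.e. `j ∈ Finset.range (i+1)`. -/
theorem stmt3 {d : ℕ → ℕ} (L : ∀ i, Matrix (Fin (d i)) (Fin (d i)) ℂ)
    (C : ∀ i, Matrix (Fin (d (i+1))) (Fin (d i)) ℂ)
    (V : ∀ i, Matrix (Fin (d i)) (Fin (d i)) ℂ)
    (ev : ∀ i, Fin (d i) → ℂ)
    (hdiag : ∀ i, L i = V i * Matrix.diagonal (ev i) * (V i)⁻¹)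
    (hV : ∀ i, IsUnit (V i))
    (hLu : ∀ i, IsUnit (L i))
    (hsp : ∀ i j : ℕ, i ≠ j → ∀ ℓ m, ev i ℓ ≠ ev j m)
    (x : ∀ i, EuclideanSpace ℂ (Fin (d i))) (i t : ℕ) :
    ‖(LinStep L C)^[t] x (i+1) - matCLM ((L (i+1)) ^ t) (pert L C V ev x (i+1))‖
      ≤ ∑ j ∈ Finset.range (i+1),
          opN (Dmat L C V ev (i+1) j) * ‖matCLM ((L j) ^ t) (pert L C V ev x j)‖ := by
  rw [iterate_LinStep_eq L C V ev hdiag hV hLu hsp x t (i+1), Finset.sum_range_succ, Dmat_self,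
    matCLM_one, Nat.sub_self, pow_zero, one_smul, add_sub_cancel_right]
  refine (norm_sum_le _ _).trans (Finset.sum_le_sum fun j _ => ?_)
  rw [norm_smul, norm_pow, norm_neg, norm_one, one_pow, one_mul]
  exact (matCLM _).le_opNorm _
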